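/- Let m ≥ 1 and let f be an axially symmetric function, continuously differentiable on a neighborhood of the closure of D_m, with f = 0 on the horizontal boundary ∂^H D_m. Then for every integer j₀ with 1 ≤ j₀ ≤ m, ∫_{D_m} ( f²/r² ) dx ≤ ( max_{j₀ ≤ j ≤ m} h_j²/r_j² ) ∫_{D_m} |∂_{x₃} f|² dx + 4^{j₀} ∫_{D_m} f² dx. -/

import Mathlib

noncomputable section

open Real MeasureTheory Set

/-- Inner radius of the `j`-th rectangle: `r_j = 2^(-j)`. -/
def rW (j : ℕ) : ℝ := (2 : ℝ) ^ (-(j : ℝ))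

/-- Height of the `j`-th rectangle: `h_j = 2^(-β (j-1))`. -/
def hH (β : ℝ) (j : ℕ) : ℝ := (2 : ℝ) ^ (-β * ((j : ℝ) - 1))

/-- The rectangle `S_j` in the `(r, x₃)` cross-section. -/
def Srect (β : ℝ) (j : ℕ) : Set (ℝ × ℝ) :=
  {p : ℝ × ℝ | rW j ≤ p.1 ∧ p.1 < rW (j - 1) ∧ 0 < p.2 ∧ p.2 < hH β j}

/-- The `(r, x₃)` cross-section of the domain `D_m`. -/
def Ddom (β : ℝ) (m : ℕ) : Set (ℝ × ℝ) := ⋃ j ∈ Finset.Icc 1 m, Srect β j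

/-- The horizontal part `∂^H D_m` of the boundary of `D_m` (where `x₃` is locally constant). -/
def bdH (β : ℝ) (m : ℕ) : Set (ℝ × ℝ) :=
  {p : ℝ × ℝ | p.2 = 0 ∧ rW m ≤ p.1 ∧ p.1 ≤ 1} ∪
    ⋃ j ∈ Finset.Icc 1 m,
      {p : ℝ × ℝ | p.2 = hH β j ∧ rW j ≤ p.1 ∧ p.1 ≤ rW (j - 1)}

/-- The vertical part `∂^V D_m` of the boundary of `D_m` (where `r` is locally constant). -/
def bdV (β : ℝ) (m : ℕ) : Set (ℝ × ℝ) :=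
  {p : ℝ × ℝ | p.1 = 1 ∧ 0 ≤ p.2 ∧ p.2 ≤ 1} ∪
    {p : ℝ × ℝ | p.1 = rW m ∧ 0 ≤ p.2 ∧ p.2 ≤ hH β m} ∪
    ⋃ j ∈ Finset.Icc 1 (m - 1),
      {p : ℝ × ℝ | p.1 = rW j ∧ hH β (j + 1) ≤ p.2 ∧ p.2 ≤ hH β j}

/-- The full boundary `∂ D_m` of `D_m`. -/
def bdD (β : ℝ) (m : ℕ) : Set (ℝ × ℝ) := bdH β m ∪ bdV β m

/-- The corner points of the polygonal cross-section of `D_m`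
(i.e. the corner circles of the 3D domain). -/
def cornerSet (β : ℝ) (m : ℕ) : Set (ℝ × ℝ) :=
  ({(rW m, 0), ((1 : ℝ), 0), ((1 : ℝ), (1 : ℝ)), (rW m, hH β m)} : Set (ℝ × ℝ)) ∪
    ⋃ j ∈ Finset.Icc 1 (m - 1),
      ({(rW j, hH β j), (rW j, hH β (j + 1))} : Set (ℝ × ℝ))

/-- Radial partial derivative `∂_r`. -/
def pdr (F : ℝ × ℝ → ℝ) (p : ℝ × ℝ) : ℝ := deriv (fun r => F (r, p.2)) p.1

/-- Vertical partial derivative `∂_{x₃}`. -/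
def pdz (F : ℝ × ℝ → ℝ) (p : ℝ × ℝ) : ℝ := deriv (fun z => F (p.1, z)) p.2

/-- The axially symmetric Laplacian `Δ = ∂_r² + (1/r) ∂_r + ∂_{x₃}²`. -/
def cylLap (F : ℝ × ℝ → ℝ) (p : ℝ × ℝ) : ℝ :=
  pdr (pdr F) p + (1 / p.1) * pdr F p + pdz (pdz F) p

/-- The integral of an axially symmetric function over the 3-dimensional domain `D_m`,
computed in the cross-section: `∫_{D_m} f dx = 2π ∬ F r dr dx₃`. -/
def cylIntegral (β : ℝ) (m : ℕ) (F : ℝ × ℝ → ℝ) : ℝ :=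
  ∫ p in Ddom β m, F p * (2 * π * p.1)

/-- The vertical cross-section segment `D_m ∩ {r = c}` of the cross-section. -/
def vertSeg (β : ℝ) (m : ℕ) (c : ℝ) : Set ℝ := {z : ℝ | (c, z) ∈ Ddom β m}

/-!
On each rectangle `S_j` the function vanishes on the bottom edge, so the fundamental theorem of
calculus and the Cauchy–Schwarz inequality along vertical segments give
`∫_{S_j} f² ≤ h_j² ∫_{S_j} |∂_{x₃} f|²`. Since `1 / r² ≤ 1 / r_j² = 4 ^ j` on `S_j`, the rectangles
with `j ≤ j₀` are absorbed by the term `4 ^ j₀ ∫ f²`, and those with `j ≥ j₀` by the derivative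
term.
-/

section Poincare

variable {α E : Type*} [MeasurableSpace α] [NormedAddCommGroup E] [NormedSpace ℝ E]
  [CompleteSpace E]

lemma norm_integral_sq_le {μ : Measure α} [IsFiniteMeasure μ] {f : α → E} (hf : MemLp f 2 μ) :
    ‖∫ x, f x ∂μ‖ ^ 2 ≤ μ.real univ * ∫ x, ‖f x‖ ^ 2 ∂μ := by
  rcases eq_zero_or_neZero μ with rfl | _
  · simp
  have jensen : ‖⨍ x, f x ∂μ‖ ^ 2 ≤ ⨍ x, ‖f x‖ ^ 2 ∂μ :=
    ((convexOn_norm convex_univ).pow (fun x _ => norm_nonneg x) 2).map_average_le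
      (by fun_prop) isClosed_univ (by simp) (hf.integrable one_le_two)
      (hf.integrable_norm_pow two_ne_zero)
  rw [← measure_smul_average μ f, ← measure_smul_average μ fun x => ‖f x‖ ^ 2, norm_smul,
    Real.norm_of_nonneg measureReal_nonneg, smul_eq_mul, mul_pow, sq (μ.real univ), mul_assoc]
  gcongr

variable {a b : ℝ} {g : ℝ → E}

lemma norm_sq_le_mul_integral_norm_deriv_sq (hcont : ContinuousOn g (Icc a b))
    (hdiff : ∀ z ∈ Ioo a b, DifferentiableAt ℝ g z)
    (hderiv : MemLp (deriv g) 2 (volume.restrict (Ioo a b))) (ha : g a = 0)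
    {z : ℝ} (hz : z ∈ Ioo a b) :
    ‖g z‖ ^ 2 ≤ (b - a) * ∫ t in Ioo a b, ‖deriv g t‖ ^ 2 := by
  have hsub : Ioo a z ⊆ Ioo a b := Ioo_subset_Ioo_right hz.2.le
  have hderiv_z : MemLp (deriv g) 2 (volume.restrict (Ioo a z)) :=
    hderiv.mono_measure (Measure.restrict_mono_set volume hsub)
  have ftc : ∫ t in Ioo a z, deriv g t = g z := by
    rw [← integral_Ioc_eq_integral_Ioo, ← intervalIntegral.integral_of_le hz.1.le,
      intervalIntegral.integral_eq_sub_of_hasDerivAt_of_le hz.1.le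
        (hcont.mono (Icc_subset_Icc_right hz.2.le))
        (fun t ht => (hdiff t (hsub ht)).hasDerivAt)
        ((intervalIntegrable_iff_integrableOn_Ioo_of_le hz.1.le).mpr
          (hderiv_z.integrable one_le_two)), ha, sub_zero]
  calc ‖g z‖ ^ 2 ≤ (z - a) * ∫ t in Ioo a z, ‖deriv g t‖ ^ 2 := by
        simpa [ftc, hz.1.le] using norm_integral_sq_le hderiv_z
    _ ≤ (b - a) * ∫ t in Ioo a b, ‖deriv g t‖ ^ 2 := by
        gcongr
        · exact sub_nonneg.mpr (hz.1.trans hz.2).le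
        · exact hz.2.le
        · exact .of_forall fun t => sq_nonneg _
        · exact hderiv.integrable_norm_pow two_ne_zero

lemma integral_norm_sq_le_mul_integral_norm_deriv_sq (hcont : ContinuousOn g (Icc a b))
    (hdiff : ∀ z ∈ Ioo a b, DifferentiableAt ℝ g z)
    (hderiv : MemLp (deriv g) 2 (volume.restrict (Ioo a b))) (ha : g a = 0) :
    ∫ z in Ioo a b, ‖g z‖ ^ 2 ≤ (b - a) ^ 2 * ∫ z in Ioo a b, ‖deriv g z‖ ^ 2 := by
  rcases le_or_gt b a with hba | hab
  · simp [Ioo_eq_empty_of_le hba]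
  calc ∫ z in Ioo a b, ‖g z‖ ^ 2
      ≤ ∫ _ in Ioo a b, (b - a) * ∫ t in Ioo a b, ‖deriv g t‖ ^ 2 :=
        setIntegral_mono_on
          ((hcont.norm.pow 2).integrableOn_Icc.mono_set Ioo_subset_Icc_self)
          (integrableOn_const (by simp)) measurableSet_Ioo
          fun z hz => norm_sq_le_mul_integral_norm_deriv_sq hcont hdiff hderiv ha hz
    _ = (b - a) ^ 2 * ∫ z in Ioo a b, ‖deriv g z‖ ^ 2 := by
        simp [hab.le, sq, mul_assoc]

lemma integral_prod_norm_sq_mul_le {μ : Measure α} [SFinite μ] {f : α × ℝ → E} {w : α → ℝ}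
    (hw : ∀ᵐ x ∂μ, 0 < w x)
    (hcont : ∀ᵐ x ∂μ, ContinuousOn (fun z => f (x, z)) (Icc a b))
    (hdiff : ∀ᵐ x ∂μ, ∀ z ∈ Ioo a b, DifferentiableAt ℝ (fun z => f (x, z)) z)
    (ha : ∀ᵐ x ∂μ, f (x, a) = 0)
    (hf : Integrable (fun p => ‖f p‖ ^ 2 * w p.1) (μ.prod (volume.restrict (Ioo a b))))
    (hderiv : Integrable (fun p : α × ℝ => ‖deriv (fun z => f (p.1, z)) p.2‖ ^ 2 * w p.1)
      (μ.prod (volume.restrict (Ioo a b)))) :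
    ∫ p, ‖f p‖ ^ 2 * w p.1 ∂μ.prod (volume.restrict (Ioo a b)) ≤
      (b - a) ^ 2 * ∫ p : α × ℝ, ‖deriv (fun z => f (p.1, z)) p.2‖ ^ 2 * w p.1
        ∂μ.prod (volume.restrict (Ioo a b)) := by
  rw [integral_prod _ hf, integral_prod _ hderiv, ← integral_const_mul]
  refine integral_mono_ae hf.integral_prod_left (hderiv.integral_prod_left.const_mul _) ?_
  filter_upwards [hw, hcont, hdiff, ha, hderiv.prod_right_ae] with x hwx hcx hdx hax hix
  have hmem : MemLp (deriv fun z => f (x, z)) 2 (volume.restrict (Ioo a b)) :=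
    (memLp_two_iff_integrable_sq_norm (aestronglyMeasurable_deriv _ _)).mpr
      ((integrable_mul_const_iff hwx.ne'.isUnit _).mp hix)
  simp only [integral_mul_const, ← mul_assoc]
  gcongr
  exact integral_norm_sq_le_mul_integral_norm_deriv_sq hcx hdx hmem hax

end Poincare

section Geometry

variable (β : ℝ) (m j : ℕ)

lemma rW_pos : 0 < rW j := by unfold rW; positivity

lemma rW_antitone : Antitone rW := fun i j hij => by
  unfold rW
  gcongr
  norm_num

lemma rW_zero : rW 0 = 1 := by simp [rW]

lemma inv_rW_sq : (rW j ^ 2)⁻¹ = 4 ^ j := by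
  rw [rW, rpow_neg zero_le_two, rpow_natCast, inv_pow, inv_inv, pow_right_comm]
  norm_num

lemma hH_pos : 0 < hH β j := by unfold hH; positivity

lemma Srect_eq_prod : Srect β j = Ico (rW j) (rW (j - 1)) ×ˢ Ioo 0 (hH β j) := by
  ext p; simp [Srect, and_assoc]

lemma measurableSet_Srect : MeasurableSet (Srect β j) := by
  rw [Srect_eq_prod]; exact measurableSet_Ico.prod measurableSet_Ioo

lemma isBounded_Srect : Bornology.IsBounded (Srect β j) := by
  rw [Srect_eq_prod]; exact (Metric.isBounded_Ico _ _).prod (Metric.isBounded_Ioo _ _)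

lemma pairwise_disjoint_Srect : Pairwise (Function.onFun Disjoint (Srect β)) := fun i j hij => by
  simp only [Function.onFun, Srect_eq_prod]
  exact (rW_antitone.pairwise_disjoint_on_Ico_pred hij).set_prod_left _ _

lemma Ico_prod_Icc_subset_closure_Srect :
    Ico (rW j) (rW (j - 1)) ×ˢ Icc 0 (hH β j) ⊆ closure (Srect β j) := by
  rw [Srect_eq_prod, closure_prod_eq, closure_Ioo (hH_pos β j).ne]
  exact prod_mono_left subset_closure

lemma isBounded_Ddom : Bornology.IsBounded (Ddom β m) :=
  (Bornology.isBounded_biUnion_finset _).mpr fun j _ => isBounded_Srect β j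

variable {m j}

lemma fst_pos_of_mem_Srect {p : ℝ × ℝ} (hp : p ∈ Srect β j) : 0 < p.1 :=
  (rW_pos j).trans_le hp.1

lemma Srect_subset_Ddom (hj : j ∈ Finset.Icc 1 m) : Srect β j ⊆ Ddom β m :=
  subset_biUnion_of_mem (u := Srect β) hj

lemma rW_le_fst_of_mem_closure_Ddom {p : ℝ × ℝ} (hp : p ∈ closure (Ddom β m)) : rW m ≤ p.1 :=
  closure_minimal (t := {p : ℝ × ℝ | rW m ≤ p.1})
    (iUnion₂_subset fun _ hj _ hp => (rW_antitone (Finset.mem_Icc.mp hj).2).trans hp.1)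
    (isClosed_le continuous_const continuous_fst) hp

end Geometry

lemma integrableOn_of_continuousOn_closure {X E : Type*} [MetricSpace X] [ProperSpace X]
    [MeasurableSpace X] [OpensMeasurableSpace X] [NormedAddCommGroup E] {μ : Measure X}
    [IsFiniteMeasureOnCompacts μ] {s : Set X} {f : X → E} (hs : Bornology.IsBounded s)
    (hf : ContinuousOn f (closure s)) : IntegrableOn f s μ :=
  (hf.integrableOn_compact hs.isCompact_closure).mono_set subset_closure

section Cylindrical

variable {β : ℝ} {m j : ℕ} {f : ℝ × ℝ → ℝ}

lemma setIntegral_Ddom {E : Type*} [NormedAddCommGroup E] [NormedSpace ℝ E] {G : ℝ × ℝ → E}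
    (hG : IntegrableOn G (Ddom β m)) :
    ∫ p in Ddom β m, G p = ∑ j ∈ Finset.Icc 1 m, ∫ p in Srect β j, G p :=
  integral_biUnion_finset _ (fun j _ => measurableSet_Srect β j)
    ((pairwise_disjoint_Srect β).set_pairwise _) fun _ hj => hG.mono_set (Srect_subset_Ddom β hj)

lemma integrableOn_Ddom_sq (hf : ContinuousOn f (closure (Ddom β m))) :
    IntegrableOn (fun p => f p ^ 2 * (2 * π * p.1)) (Ddom β m) :=
  integrableOn_of_continuousOn_closure (isBounded_Ddom β m) ((hf.pow 2).mul (by fun_prop))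

lemma integrableOn_Ddom_sq_div_sq (hf : ContinuousOn f (closure (Ddom β m))) :
    IntegrableOn (fun p => f p ^ 2 / p.1 ^ 2 * (2 * π * p.1)) (Ddom β m) :=
  integrableOn_of_continuousOn_closure (isBounded_Ddom β m) <|
    ((hf.pow 2).div (by fun_prop) fun _ hp =>
      pow_ne_zero 2 ((rW_pos m).trans_le (rW_le_fst_of_mem_closure_Ddom β hp)).ne').mul
      (by fun_prop)

lemma setIntegral_Srect_nonneg {G : ℝ × ℝ → ℝ} (hG : ∀ p ∈ Srect β j, 0 ≤ G p) :
    0 ≤ ∫ p in Srect β j, G p * (2 * π * p.1) :=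
  setIntegral_nonneg (measurableSet_Srect β j) fun p hp =>
    mul_nonneg (hG p hp) (mul_pos two_pi_pos (fst_pos_of_mem_Srect β hp)).le

lemma setIntegral_Srect_sq_div_sq_le
    (hf : IntegrableOn (fun p => f p ^ 2 * (2 * π * p.1)) (Srect β j)) :
    ∫ p in Srect β j, f p ^ 2 / p.1 ^ 2 * (2 * π * p.1) ≤
      4 ^ j * ∫ p in Srect β j, f p ^ 2 * (2 * π * p.1) := by
  have hnonneg : ∀ p ∈ Srect β j, 0 ≤ f p ^ 2 / p.1 ^ 2 * (2 * π * p.1) := fun p hp => by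
    have := fst_pos_of_mem_Srect β hp
    positivity
  have hle : ∀ p ∈ Srect β j,
      f p ^ 2 / p.1 ^ 2 * (2 * π * p.1) ≤ 4 ^ j * (f p ^ 2 * (2 * π * p.1)) := fun p hp => by
    have hp_pos := fst_pos_of_mem_Srect β hp
    have inv_sq_le : (p.1 ^ 2)⁻¹ ≤ 4 ^ j := by
      rw [← inv_rW_sq]
      exact inv_anti₀ (pow_pos (rW_pos j) 2) (pow_le_pow_left₀ (rW_pos j).le hp.1 2)
    calc f p ^ 2 / p.1 ^ 2 * (2 * π * p.1) = (p.1 ^ 2)⁻¹ * (f p ^ 2 * (2 * π * p.1)) := by ring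
      _ ≤ 4 ^ j * (f p ^ 2 * (2 * π * p.1)) := by gcongr
  have hae := ae_restrict_mem (μ := volume) (measurableSet_Srect β j)
  rw [← integral_const_mul]
  exact integral_mono_of_nonneg (hae.mono hnonneg) (hf.const_mul _) (hae.mono hle)

lemma setIntegral_Srect_sq_le (hcont : ContinuousOn f (closure (Srect β j)))
    (hdiff : ∀ p ∈ Srect β j, DifferentiableAt ℝ (fun z => f (p.1, z)) p.2)
    (hpdz : IntegrableOn (fun p => pdz f p ^ 2 * (2 * π * p.1)) (Srect β j))
    (hbot : ∀ r ∈ Ico (rW j) (rW (j - 1)), f (r, 0) = 0) :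
    ∫ p in Srect β j, f p ^ 2 * (2 * π * p.1) ≤
      hH β j ^ 2 * ∫ p in Srect β j, pdz f p ^ 2 * (2 * π * p.1) := by
  have hint : IntegrableOn (fun p => f p ^ 2 * (2 * π * p.1)) (Srect β j) :=
    integrableOn_of_continuousOn_closure (isBounded_Srect β j) ((hcont.pow 2).mul (by fun_prop))
  have hcont_slice : ∀ r ∈ Ico (rW j) (rW (j - 1)),
      ContinuousOn (fun z => f (r, z)) (Icc 0 (hH β j)) := fun r hr =>
    hcont.comp (by fun_prop) fun z hz => Ico_prod_Icc_subset_closure_Srect β j ⟨hr, hz⟩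
  rw [Srect_eq_prod] at hdiff
  have hdiff_slice : ∀ r ∈ Ico (rW j) (rW (j - 1)), ∀ z ∈ Ioo 0 (hH β j),
      DifferentiableAt ℝ (fun z => f (r, z)) z := fun r hr z hz => hdiff (r, z) ⟨hr, hz⟩
  have hvol : volume.restrict (Srect β j) =
      (volume.restrict (Ico (rW j) (rW (j - 1)))).prod (volume.restrict (Ioo 0 (hH β j))) := by
    rw [Srect_eq_prod, Measure.prod_restrict, Measure.volume_eq_prod]
  rw [IntegrableOn, hvol] at hint hpdz
  have hae := ae_restrict_mem (μ := volume) (measurableSet_Ico (a := rW j) (b := rW (j - 1)))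
  have key := integral_prod_norm_sq_mul_le (f := f) (w := fun r => 2 * π * r)
    (hae.mono fun r hr => mul_pos two_pi_pos ((rW_pos j).trans_le hr.1))
    (hae.mono hcont_slice) (hae.mono hdiff_slice) (hae.mono hbot)
    (by simpa only [norm_eq_abs, sq_abs] using hint)
    (by simpa only [norm_eq_abs, sq_abs, pdz] using hpdz)
  simpa only [norm_eq_abs, sq_abs, sub_zero, hvol, pdz] using key

lemma setIntegral_Srect_sq_div_sq_le_add (hcont : ContinuousOn f (closure (Srect β j)))
    (hdiff : ∀ p ∈ Srect β j, DifferentiableAt ℝ (fun z => f (p.1, z)) p.2)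
    (hpdz : IntegrableOn (fun p => pdz f p ^ 2 * (2 * π * p.1)) (Srect β j))
    (hbot : ∀ r ∈ Ico (rW j) (rW (j - 1)), f (r, 0) = 0) {j₀ : ℕ} {M : ℝ} (hM₀ : 0 ≤ M)
    (hM : j₀ ≤ j → hH β j ^ 2 / rW j ^ 2 ≤ M) :
    ∫ p in Srect β j, f p ^ 2 / p.1 ^ 2 * (2 * π * p.1) ≤
      M * (∫ p in Srect β j, pdz f p ^ 2 * (2 * π * p.1)) +
        4 ^ j₀ * ∫ p in Srect β j, f p ^ 2 * (2 * π * p.1) := by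
  have hdiv_le := setIntegral_Srect_sq_div_sq_le
    (integrableOn_of_continuousOn_closure (isBounded_Srect β j) ((hcont.pow 2).mul (by fun_prop)))
  have hpoincare := setIntegral_Srect_sq_le hcont hdiff hpdz hbot
  have hpdz_nonneg := setIntegral_Srect_nonneg (β := β) (j := j) fun p _ => sq_nonneg (pdz f p)
  have hf_nonneg := setIntegral_Srect_nonneg (β := β) (j := j) fun p _ => sq_nonneg (f p)
  set A := ∫ p in Srect β j, f p ^ 2 / p.1 ^ 2 * (2 * π * p.1)
  set B := ∫ p in Srect β j, pdz f p ^ 2 * (2 * π * p.1)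
  set C := ∫ p in Srect β j, f p ^ 2 * (2 * π * p.1)
  rcases le_total j j₀ with hle | hge
  · calc A ≤ 4 ^ j * C := hdiv_le
      _ ≤ 4 ^ j₀ * C := by gcongr; norm_num
      _ ≤ M * B + 4 ^ j₀ * C := le_add_of_nonneg_left (by positivity)
  · calc A ≤ 4 ^ j * C := hdiv_le
      _ ≤ 4 ^ j * (hH β j ^ 2 * B) := by gcongr
      _ = hH β j ^ 2 / rW j ^ 2 * B := by rw [div_eq_mul_inv, inv_rW_sq]; ring
      _ ≤ M * B := by gcongr; exact hM hge
      _ ≤ M * B + 4 ^ j₀ * C := le_add_of_nonneg_right (by positivity)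

theorem weighted_poincare_general (hcont : ContinuousOn f (closure (Ddom β m)))
    (hdiff : ∀ p ∈ Ddom β m, DifferentiableAt ℝ (fun z => f (p.1, z)) p.2)
    (hpdz : IntegrableOn (fun p => pdz f p ^ 2 * (2 * π * p.1)) (Ddom β m))
    (hbot : ∀ r ∈ Ico (rW m) 1, f (r, 0) = 0) {j₀ : ℕ} (hj₀m : j₀ ≤ m) :
    cylIntegral β m (fun p => f p ^ 2 / p.1 ^ 2)
      ≤ ((Finset.Icc j₀ m).sup' (Finset.nonempty_Icc.mpr hj₀m) fun j => hH β j ^ 2 / rW j ^ 2)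
          * cylIntegral β m (fun p => pdz f p ^ 2)
        + 4 ^ j₀ * cylIntegral β m fun p => f p ^ 2 := by
  set M := (Finset.Icc j₀ m).sup' (Finset.nonempty_Icc.mpr hj₀m) fun j => hH β j ^ 2 / rW j ^ 2
  have hM : ∀ j ≤ m, j₀ ≤ j → hH β j ^ 2 / rW j ^ 2 ≤ M := fun j hjm hj₀ =>
    Finset.le_sup' (fun j => hH β j ^ 2 / rW j ^ 2) (Finset.mem_Icc.mpr ⟨hj₀, hjm⟩)
  have hM_nonneg : 0 ≤ M := (by positivity : 0 ≤ hH β m ^ 2 / rW m ^ 2).trans (hM m le_rfl hj₀m)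
  simp only [cylIntegral]
  rw [setIntegral_Ddom (integrableOn_Ddom_sq_div_sq hcont), setIntegral_Ddom hpdz,
    setIntegral_Ddom (integrableOn_Ddom_sq hcont), Finset.mul_sum, Finset.mul_sum,
    ← Finset.sum_add_distrib]
  refine Finset.sum_le_sum fun j hj => ?_
  have hjm : j ≤ m := (Finset.mem_Icc.mp hj).2
  have hsub : Srect β j ⊆ Ddom β m := Srect_subset_Ddom β hj
  have hIco : Ico (rW j) (rW (j - 1)) ⊆ Ico (rW m) 1 :=
    Ico_subset_Ico (rW_antitone hjm) (rW_zero ▸ rW_antitone (Nat.zero_le _))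
  exact setIntegral_Srect_sq_div_sq_le_add (hcont.mono (closure_mono hsub))
    (fun p hp => hdiff p (hsub hp)) (hpdz.mono_set hsub) (fun r hr => hbot r (hIco hr))
    hM_nonneg (hM j hjm)

end Cylindrical

lemma hasDerivAt_slice {E F : Type*} [NormedAddCommGroup E] [NormedSpace ℝ E]
    [NormedAddCommGroup F] [NormedSpace ℝ F] {f : E × ℝ → F} {p : E × ℝ}
    (hf : DifferentiableAt ℝ f p) :
    HasDerivAt (fun z => f (p.1, z)) (fderiv ℝ f p (0, 1)) p.2 :=
  hf.hasFDerivAt.comp_hasDerivAt (f := fun z => (p.1, z)) p.2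
    ((hasDerivAt_const _ _).prodMk (hasDerivAt_id _))

lemma continuousOn_pdz {f : ℝ × ℝ → ℝ} {U : Set (ℝ × ℝ)} (hU : IsOpen U)
    (hf : ContDiffOn ℝ 1 f U) : ContinuousOn (pdz f) U :=
  ((hf.continuousOn_fderiv_of_isOpen hU le_rfl).clm_apply continuousOn_const).congr fun _ hp =>
    (hasDerivAt_slice (hf.differentiableOn_one.differentiableAt (hU.mem_nhds hp))).deriv

/-- Weighted Poincaré-type inequality on `D_m` for functions vanishing
on the horizontal boundary. -/
theorem weighted_poincare (β : ℝ) (hβ : 1 < β) (hβ' : β ≤ 1.1)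
    (m : ℕ) (hm : 1 ≤ m) (f : ℝ × ℝ → ℝ)
    (hf : ∃ U : Set (ℝ × ℝ), IsOpen U ∧ closure (Ddom β m) ⊆ U ∧ ContDiffOn ℝ 1 f U)
    (hf0 : ∀ p ∈ bdH β m, f p = 0)
    (j₀ : ℕ) (hj₀1 : 1 ≤ j₀) (hj₀m : j₀ ≤ m) :
    cylIntegral β m (fun p => (f p) ^ 2 / p.1 ^ 2)
      ≤ ((Finset.Icc j₀ m).sup' (Finset.nonempty_Icc.mpr hj₀m)
            fun j => (hH β j) ^ 2 / (rW j) ^ 2)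
          * cylIntegral β m (fun p => (pdz f p) ^ 2)
        + (4 : ℝ) ^ j₀ * cylIntegral β m fun p => (f p) ^ 2 := by
  obtain ⟨U, hU, hDU, hfU⟩ := hf
  have hdiff : ∀ p ∈ Ddom β m, DifferentiableAt ℝ f p := fun p hp =>
    hfU.differentiableOn_one.differentiableAt (hU.mem_nhds (hDU (subset_closure hp)))
  exact weighted_poincare_general (hfU.continuousOn.mono hDU)
    (fun p hp => (hasDerivAt_slice (hdiff p hp)).differentiableAt)
    (integrableOn_Ddom_sq ((continuousOn_pdz hU hfU).mono hDU))
    (fun r hr => hf0 _ (.inl ⟨rfl, hr.1, hr.2.le⟩)) hj₀m
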